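/- Let X_1, …, X_n be upper extended negatively dependent random variables in a sub-linear expectation space with dominating constant K ≥ 1 and 𝔼[X_k] ≤ 0 for each k. Set S_n = Σ_{k=1}^n X_k and B_n = Σ_{k=1}^n 𝔼[X_k²]. Then for all x, y > 0: 𝕍(S_n ≥ x) ≤ 𝕍(max_{k≤n} X_k ≥ y) + K·exp{ −x²/(2(xy + B_n)) · (1 + (2/3)·ln(1 + xy/B_n)) }. -/

import Mathlib

open Filter MeasureTheory
open scoped ENNReal NNReal

noncomputable section

/-- A sub-linear expectation on `Ω`: a monotone, constant-preserving, sub-additive,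
positively homogeneous functional on real random variables (with values in the
extended reals, so that random variables without a finite expectation are allowed). -/
structure SublinearExp (Ω : Type) where
  E : (Ω → ℝ) → EReal
  mono : ∀ X Y : Ω → ℝ, (∀ ω, X ω ≤ Y ω) → E X ≤ E Y
  const_eq : ∀ c : ℝ, E (fun _ => c) = (c : EReal)
  subadd : ∀ X Y : Ω → ℝ, E (fun ω => X ω + Y ω) ≤ E X + E Y
  pos_homog : ∀ lam : ℝ, 0 ≤ lam → ∀ X : Ω → ℝ,
    E (fun ω => lam * X ω) = (lam : EReal) * E X

namespace SublinearExp

variable {Ω : Type}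

/-- The conjugate expectation `ℰ[X] := −𝔼[−X]`. -/
def cE (SL : SublinearExp Ω) (X : Ω → ℝ) : EReal := - SL.E fun ω => - X ω

/-- The upper capacity `𝕍(A) := inf{𝔼[ξ] : 1_A ≤ ξ}`. -/
def V (SL : SublinearExp Ω) (A : Set Ω) : ℝ :=
  sInf {x : ℝ | ∃ ξ : Ω → ℝ,
    (∀ ω, A.indicator (fun _ => (1 : ℝ)) ω ≤ ξ ω) ∧ SL.E ξ = (x : EReal)}

/-- The lower capacity `𝓋(A) := 1 − 𝕍(Aᶜ)`. -/
def vLow (SL : SublinearExp Ω) (A : Set Ω) : ℝ := 1 - SL.V Aᶜ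

/-- The Choquet integral `C_𝕍(X) := ∫₀^∞ 𝕍(X ≥ t) dt` (of a non-negative r.v.). -/
def Choquet (SL : SublinearExp Ω) (X : Ω → ℝ) : ℝ≥0∞ :=
  ∫⁻ t in Set.Ioi (0 : ℝ), ENNReal.ofReal (SL.V {ω | t ≤ X ω})

/-- The outer capacity `𝕍*(A) := inf{Σ_n 𝕍(A_n) : A ⊆ ∪_n A_n}`. -/
def Vout (SL : SublinearExp Ω) (A : Set Ω) : ℝ≥0∞ :=
  ⨅ (B : ℕ → Set Ω) (_ : A ⊆ ⋃ n, B n), ∑' n, ENNReal.ofReal (SL.V (B n))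

/-- The upper capacity is continuous: continuous from below and from above. -/
def ContinuousCapacity (SL : SublinearExp Ω) : Prop :=
  (∀ A : ℕ → Set Ω, Monotone A →
    Tendsto (fun n => SL.V (A n)) atTop (nhds (SL.V (⋃ n, A n)))) ∧
  (∀ A : ℕ → Set Ω, Antitone A →
    Tendsto (fun n => SL.V (A n)) atTop (nhds (SL.V (⋂ n, A n))))

/-- Bounded Lipschitz function on ℝ. -/
def IsBLip (g : ℝ → ℝ) : Prop :=
  (∃ L : NNReal, LipschitzWith L g) ∧ ∃ M : ℝ, ∀ x, |g x| ≤ M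

/-- Local Lipschitz function on ℝ: `|φ(x) − φ(y)| ≤ C(1+|x|^m+|y|^m)|x−y|`. -/
def IsLocLip (φ : ℝ → ℝ) : Prop :=
  ∃ (C : ℝ) (m : ℕ), ∀ x y : ℝ, |φ x - φ y| ≤ C * (1 + |x| ^ m + |y| ^ m) * |x - y|

/-- Upper extended negative dependence (finite family) with dominating constant `K`:
`𝔼[∏ g_i(X_i)] ≤ K ∏ 𝔼[g_i(X_i)]` for all non-negative bounded Lipschitz
non-decreasing `g_i`.  (Expectations of bounded functions are finite, whence
the `toReal`.) -/
def UENDFin (SL : SublinearExp Ω) (K : ℝ) {n : ℕ} (X : Fin n → Ω → ℝ) : Prop :=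
  ∀ g : Fin n → ℝ → ℝ, (∀ i, IsBLip (g i)) → (∀ i, Monotone (g i)) →
    (∀ i x, 0 ≤ g i x) →
    SL.E (fun ω => ∏ i, g i (X i ω)) ≤
      ((K * ∏ i, (SL.E fun ω => g i (X i ω)).toReal : ℝ) : EReal)

/-- Upper extended negative dependence for a sequence. -/
def UEND (SL : SublinearExp Ω) (K : ℝ) (X : ℕ → Ω → ℝ) : Prop :=
  ∀ n : ℕ, ∀ g : ℕ → ℝ → ℝ, (∀ i, IsBLip (g i)) → (∀ i, Monotone (g i)) →
    (∀ i x, 0 ≤ g i x) →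
    SL.E (fun ω => ∏ i ∈ Finset.range n, g i (X i ω)) ≤
      ((K * ∏ i ∈ Finset.range n, (SL.E fun ω => g i (X i ω)).toReal : ℝ) : EReal)

/-- Lower extended negative dependence for a sequence. -/
def LEND (SL : SublinearExp Ω) (K : ℝ) (X : ℕ → Ω → ℝ) : Prop :=
  ∀ n : ℕ, ∀ g : ℕ → ℝ → ℝ, (∀ i, IsBLip (g i)) → (∀ i, Antitone (g i)) →
    (∀ i x, 0 ≤ g i x) →
    SL.E (fun ω => ∏ i ∈ Finset.range n, g i (X i ω)) ≤
      ((K * ∏ i ∈ Finset.range n, (SL.E fun ω => g i (X i ω)).toReal : ℝ) : EReal)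

/-- Extended negative dependence = upper and lower END. -/
def END (SL : SublinearExp Ω) (K : ℝ) (X : ℕ → Ω → ℝ) : Prop :=
  UEND SL K X ∧ LEND SL K X

/-- Upper extended negative dependence under the conjugate expectation `ℰ`
(finite family). -/
def UENDFinConj (SL : SublinearExp Ω) (K : ℝ) {n : ℕ} (X : Fin n → Ω → ℝ) : Prop :=
  ∀ g : Fin n → ℝ → ℝ, (∀ i, IsBLip (g i)) → (∀ i, Monotone (g i)) →
    (∀ i x, 0 ≤ g i x) →
    SL.cE (fun ω => ∏ i, g i (X i ω)) ≤
      ((K * ∏ i, (SL.cE fun ω => g i (X i ω)).toReal : ℝ) : EReal)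

/-- Upper extended negative dependence under the conjugate expectation (sequence). -/
def UENDconj (SL : SublinearExp Ω) (K : ℝ) (X : ℕ → Ω → ℝ) : Prop :=
  ∀ n : ℕ, ∀ g : ℕ → ℝ → ℝ, (∀ i, IsBLip (g i)) → (∀ i, Monotone (g i)) →
    (∀ i x, 0 ≤ g i x) →
    SL.cE (fun ω => ∏ i ∈ Finset.range n, g i (X i ω)) ≤
      ((K * ∏ i ∈ Finset.range n, (SL.cE fun ω => g i (X i ω)).toReal : ℝ) : EReal)

/-- Lower extended negative dependence under the conjugate expectation (sequence). -/
def LENDconj (SL : SublinearExp Ω) (K : ℝ) (X : ℕ → Ω → ℝ) : Prop :=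
  ∀ n : ℕ, ∀ g : ℕ → ℝ → ℝ, (∀ i, IsBLip (g i)) → (∀ i, Antitone (g i)) →
    (∀ i x, 0 ≤ g i x) →
    SL.cE (fun ω => ∏ i ∈ Finset.range n, g i (X i ω)) ≤
      ((K * ∏ i ∈ Finset.range n, (SL.cE fun ω => g i (X i ω)).toReal : ℝ) : EReal)

/-- Extended negative dependence under the conjugate expectation. -/
def ENDconj (SL : SublinearExp Ω) (K : ℝ) (X : ℕ → Ω → ℝ) : Prop :=
  UENDconj SL K X ∧ LENDconj SL K X

/-- Extended independence of a sequence: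
`𝔼[∏ ψ_i(X_i)] = ∏ 𝔼[ψ_i(X_i)]` for non-negative local Lipschitz `ψ_i`,
whenever the expectations involved are finite. -/
def ExtIndep (SL : SublinearExp Ω) (X : ℕ → Ω → ℝ) : Prop :=
  ∀ n : ℕ, ∀ ψ : ℕ → ℝ → ℝ, (∀ i, IsLocLip (ψ i)) → (∀ i x, 0 ≤ ψ i x) →
    (∀ i ∈ Finset.range n, SL.E (fun ω => ψ i (X i ω)) ≠ ⊤) →
    SL.E (fun ω => ∏ i ∈ Finset.range n, ψ i (X i ω)) =
      ((∏ i ∈ Finset.range n, (SL.E fun ω => ψ i (X i ω)).toReal : ℝ) : EReal)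

/-- Extended independence of two random variables. -/
def ExtIndepPair (SL : SublinearExp Ω) (Y Z : Ω → ℝ) : Prop :=
  ∀ ψ₁ ψ₂ : ℝ → ℝ, IsLocLip ψ₁ → IsLocLip ψ₂ →
    (∀ x, 0 ≤ ψ₁ x) → (∀ x, 0 ≤ ψ₂ x) →
    SL.E (fun ω => ψ₁ (Y ω)) ≠ ⊤ → SL.E (fun ω => ψ₂ (Z ω)) ≠ ⊤ →
    SL.E (fun ω => ψ₁ (Y ω) * ψ₂ (Z ω)) =
      (((SL.E fun ω => ψ₁ (Y ω)).toReal * (SL.E fun ω => ψ₂ (Z ω)).toReal : ℝ) : EReal)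

/-- Identically distributed: `𝔼[φ(X_i)] = 𝔼[φ(X_1)]` for all local Lipschitz `φ`. -/
def IdentDist (SL : SublinearExp Ω) (X : ℕ → Ω → ℝ) : Prop :=
  ∀ (i : ℕ) (φ : ℝ → ℝ), IsLocLip φ →
    SL.E (fun ω => φ (X i ω)) = SL.E fun ω => φ (X 0 ω)

end SublinearExp

/-- `log x = ln(x ∨ e)`. -/
def paperLog (x : ℝ) : ℝ := Real.log (max x (Real.exp 1))

/-- `a_n = √(2 n log log n)` with the above convention for `log`. -/
def lilA (n : ℕ) : ℝ := Real.sqrt (2 * n * paperLog (paperLog n))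

/-!
Replacing each `X k` by the truncation `min (X k) y` changes the event `x ≤ ∑ k, X k` only on
`{∃ k, y ≤ X k}`. The truncated exponentials `exp (t * min (X k) y)` are bounded, Lipschitz and
monotone, so negative dependence factorises the Laplace transform of the truncated sum up to `K`,
and each factor is controlled through `exp v = 1 + v + v ^ 2 * φ v` with `φ` increasing: only
`𝔼[X k] ≤ 0` and the second moment enter. Markov's inequality with the optimal
`t = log (1 + x * y / B) / y` gives Bennett's exponent, and the rational lower bound for
`log (1 + u)` turns it into the exponent of the theorem.
-/

section Exponential

/-- The increasing function `φ` with `exp v = 1 + v + v ^ 2 * φ v`. It is encoded as the integral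
form of the Taylor remainder, which makes sense at `v = 0` and is visibly monotone. -/
def expRemainder (v : ℝ) : ℝ := ∫ s in (0 : ℝ)..1, (1 - s) * Real.exp (s * v)

theorem exp_sub_one_sub_eq_sq_mul_expRemainder (v : ℝ) :
    Real.exp v - 1 - v = v ^ 2 * expRemainder v := by
  have hderiv : ∀ s ∈ Set.uIcc (0 : ℝ) 1,
      HasDerivAt (fun s => ((1 - s) * v + 1) * Real.exp (s * v))
        (v ^ 2 * ((1 - s) * Real.exp (s * v))) s := fun s _ => by
    have hlin := (((hasDerivAt_id' s).const_sub 1).mul_const v).add_const 1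
    have hexp := ((hasDerivAt_id' s).mul_const v).exp
    exact (hlin.mul hexp).congr_deriv (by ring)
  rw [expRemainder, ← intervalIntegral.integral_const_mul,
    intervalIntegral.integral_eq_sub_of_hasDerivAt hderiv
      (Continuous.intervalIntegrable (by fun_prop) _ _)]
  simp only [sub_self, zero_mul, one_mul, sub_zero, zero_add, Real.exp_zero, mul_one]
  ring

theorem monotone_expRemainder : Monotone expRemainder := fun v w hvw => by
  refine intervalIntegral.integral_mono_on zero_le_one
    (Continuous.intervalIntegrable (by fun_prop) _ _)
    (Continuous.intervalIntegrable (by fun_prop) _ _) fun s hs => ?_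
  have hs₀ : 0 ≤ s := hs.1
  have hs₁ : 0 ≤ 1 - s := sub_nonneg.mpr hs.2
  gcongr

/-- Bennett's bound, per unit of variance, for the logarithm of the Laplace transform at `t` of a
random variable with non-positive mean and values at most `y`; meant for `y ≠ 0`. -/
def bennettCumulant (t y : ℝ) : ℝ := (Real.exp (t * y) - 1 - t * y) / y ^ 2

theorem bennettCumulant_nonneg (t y : ℝ) : 0 ≤ bennettCumulant t y :=
  div_nonneg (by linarith [Real.add_one_le_exp (t * y)]) (sq_nonneg y)

theorem exp_mul_le_of_le {t y z : ℝ} (ht : 0 ≤ t) (hy : y ≠ 0) (hzy : z ≤ y) :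
    Real.exp (t * z) ≤ 1 + t * z + bennettCumulant t y * z ^ 2 := by
  have hrem := calc
    Real.exp (t * z) - 1 - t * z
    _ = t ^ 2 * expRemainder (t * z) * z ^ 2 := by
        rw [exp_sub_one_sub_eq_sq_mul_expRemainder]
        ring
    _ ≤ t ^ 2 * expRemainder (t * y) * z ^ 2 := by
        gcongr
        exact monotone_expRemainder (by gcongr)
    _ = bennettCumulant t y * z ^ 2 := by
        rw [bennettCumulant, exp_sub_one_sub_eq_sq_mul_expRemainder]
        field_simp
  linarith

theorem exp_mul_min_le {t y : ℝ} (ht : 0 ≤ t) (hy : 0 < y) (z : ℝ) :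
    Real.exp (t * min z y) ≤ 1 + (t * z + bennettCumulant t y * z ^ 2) := by
  have hsq : min z y ^ 2 ≤ z ^ 2 := by
    rcases min_cases z y with ⟨h, _⟩ | ⟨h, _⟩ <;> rw [h]
    gcongr
  calc Real.exp (t * min z y)
      ≤ 1 + t * min z y + bennettCumulant t y * min z y ^ 2 :=
        exp_mul_le_of_le ht hy.ne' (min_le_right z y)
    _ ≤ 1 + t * z + bennettCumulant t y * z ^ 2 := by
        gcongr
        · exact min_le_left z y
        · exact bennettCumulant_nonneg t y
    _ = 1 + (t * z + bennettCumulant t y * z ^ 2) := add_assoc _ _ _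

theorem one_le_exp_neg_mul_prod_exp_mul_min {ι : Type*} [Fintype ι] {z : ι → ℝ} {t x y : ℝ}
    (ht : 0 ≤ t) (hx : x ≤ ∑ k, z k) (hy : ∀ k, z k ≤ y) :
    1 ≤ Real.exp (-(t * x)) * ∏ k, Real.exp (t * min (z k) y) := by
  simp only [fun k => min_eq_left (hy k)]
  rw [← Real.exp_sum, ← Real.exp_add, ← Finset.mul_sum, Real.one_le_exp_iff]
  linarith [mul_le_mul_of_nonneg_left hx ht]

theorem lipschitzOnWith_exp_Iic (c : ℝ) :
    LipschitzOnWith (Real.exp c).toNNReal Real.exp (Set.Iic c) := by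
  refine (convex_Iic c).lipschitzOnWith_of_nnnorm_deriv_le
    (fun _ _ => Real.differentiableAt_exp) fun v hv => ?_
  rw [Real.deriv_exp, ← Real.toNNReal_eq_nnnorm_of_nonneg (Real.exp_pos v).le]
  exact Real.toNNReal_le_toNNReal (Real.exp_le_exp.mpr hv)

end Exponential

section Exponent

theorem hasDerivAt_log_one_add_sub_div {u : ℝ} (hu : 0 ≤ u) :
    HasDerivAt
      (fun u => Real.log (1 + u) - 3 * u * (2 + 3 * u) / (2 * (3 + 6 * u + 2 * u ^ 2)))
      (u ^ 3 * (3 + 4 * u) / ((1 + u) * (3 + 6 * u + 2 * u ^ 2) ^ 2)) u := by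
  have hid := hasDerivAt_id' u
  have hlog : HasDerivAt (fun u => Real.log (1 + u)) (1 / (1 + u)) u :=
    (hid.const_add 1).log (by positivity)
  have hnum : HasDerivAt (fun u => 3 * u * (2 + 3 * u)) (6 + 18 * u) u :=
    ((hid.const_mul 3).mul ((hid.const_mul 3).const_add 2)).congr_deriv (by ring)
  have hden : HasDerivAt (fun u => 2 * (3 + 6 * u + 2 * u ^ 2)) (12 + 8 * u) u :=
    ((((hid.const_mul 6).const_add 3).add ((hasDerivAt_pow 2 u).const_mul 2)).const_mul
      2).congr_deriv (by push_cast; ring)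
  refine (hlog.sub (hnum.div hden (by positivity))).congr_deriv ?_
  field_simp
  ring

theorem div_le_log_one_add {u : ℝ} (hu : 0 ≤ u) :
    3 * u * (2 + 3 * u) / (2 * (3 + 6 * u + 2 * u ^ 2)) ≤ Real.log (1 + u) := by
  have hmono := monotoneOn_of_hasDerivWithinAt_nonneg (convex_Ici (0 : ℝ))
    (fun v hv => (hasDerivAt_log_one_add_sub_div hv).continuousAt.continuousWithinAt)
    (fun v hv => (hasDerivAt_log_one_add_sub_div (interior_subset hv)).hasDerivWithinAt)
    fun v hv => by
      have hv₀ : 0 ≤ v := interior_subset (s := Set.Ici (0 : ℝ)) hv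
      positivity
  simpa using hmono Set.self_mem_Ici hu hu

/-- Bennett's function `h`, the rate function of the centred Poisson distribution with mean one. -/
def bennettRate (u : ℝ) : ℝ := (1 + u) * Real.log (1 + u) - u

theorem sq_div_mul_le_bennettRate {u : ℝ} (hu : 0 ≤ u) :
    u ^ 2 / (2 * (1 + u)) * (1 + 2 / 3 * Real.log (1 + u)) ≤ bennettRate u := by
  have hlog := div_le_log_one_add hu
  rw [div_le_iff₀ (by positivity)] at hlog
  rw [bennettRate, div_mul_eq_mul_div, div_le_iff₀ (by positivity)]
  linarith

theorem neg_mul_add_bennettCumulant_log_div_mul {B x y : ℝ} (hB : B ≠ 0) (hy : y ≠ 0)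
    (hu : 0 < 1 + x * y / B) :
    -(Real.log (1 + x * y / B) / y * x) + bennettCumulant (Real.log (1 + x * y / B) / y) y * B =
      -(B / y ^ 2 * bennettRate (x * y / B)) := by
  rw [bennettCumulant, bennettRate, div_mul_cancel₀ _ hy, Real.exp_log hu]
  field_simp
  ring

theorem exists_neg_mul_add_bennettCumulant_mul_le {B x y : ℝ} (hB : 0 ≤ B)
    (hx : 0 < x) (hy : 0 < y) :
    ∃ t : ℝ, 0 ≤ t ∧ -(t * x) + bennettCumulant t y * B ≤
      -(x ^ 2 / (2 * (x * y + B))) * (1 + (2 / 3) * Real.log (1 + x * y / B)) := by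
  rcases hB.eq_or_lt with rfl | hB
  · -- Here `x * y / 0 = 0`, so the target exponent is `-x / (2 * y)`.
    refine ⟨1 / (2 * y), by positivity, le_of_eq ?_⟩
    simp only [mul_zero, add_zero, div_zero, Real.log_one, mul_one]
    field_simp
  · have hu : 0 ≤ x * y / B := by positivity
    refine ⟨Real.log (1 + x * y / B) / y,
      div_nonneg (Real.log_nonneg (by linarith)) hy.le, ?_⟩
    have hscale : x ^ 2 / (2 * (x * y + B)) =
        B / y ^ 2 * ((x * y / B) ^ 2 / (2 * (1 + x * y / B))) := by
      have hne : x * y + B ≠ 0 := by positivity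
      have hne' : B + x * y ≠ 0 := by positivity
      field_simp
      ring
    rw [neg_mul_add_bennettCumulant_log_div_mul hB.ne' hy.ne' (by positivity), neg_mul, hscale,
      mul_assoc (B / y ^ 2)]
    gcongr
    exact sq_div_mul_le_bennettRate hu

end Exponent

theorem exists_coe_eq_of_sum_eq_coe {ι : Type*} {s : Finset ι} {f : ι → EReal} {B : ℝ}
    (hf : ∀ i ∈ s, 0 ≤ f i) (hB : ∑ i ∈ s, f i = B) :
    ∃ b : ι → ℝ, (∀ i ∈ s, f i = b i) ∧ ∑ i ∈ s, b i = B := by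
  have hcoe : ∀ i ∈ s, f i = ((f i).toReal : EReal) := fun i hi =>
    (EReal.coe_toReal
      (ne_top_of_le_ne_top (EReal.coe_ne_top B) (hB ▸ Finset.single_le_sum hf hi))
      (ne_bot_of_le_ne_bot EReal.zero_ne_bot (hf i hi))).symm
  refine ⟨fun i => (f i).toReal, hcoe, EReal.coe_injective ?_⟩
  let coeHom : ℝ →+ EReal := ⟨⟨Real.toEReal, EReal.coe_zero⟩, EReal.coe_add⟩
  exact (map_sum coeHom _ s).trans ((Finset.sum_congr rfl hcoe).symm.trans hB)

namespace SublinearExp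

variable {Ω : Type} (SL : SublinearExp Ω)

theorem E_nonneg {ξ : Ω → ℝ} (hξ : ∀ ω, 0 ≤ ξ ω) : 0 ≤ SL.E ξ := by
  simpa only [SL.const_eq, EReal.coe_zero] using SL.mono (fun _ => 0) ξ hξ

theorem V_le_of_E_le {A : Set Ω} {ξ : Ω → ℝ} {c : ℝ}
    (hξ : ∀ ω, A.indicator (fun _ => (1 : ℝ)) ω ≤ ξ ω) (hc : SL.E ξ ≤ c) : SL.V A ≤ c := by
  have hE_nonneg : ∀ ζ : Ω → ℝ, (∀ ω, A.indicator (fun _ => (1 : ℝ)) ω ≤ ζ ω) → 0 ≤ SL.E ζ :=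
    fun ζ hζ => SL.E_nonneg fun ω =>
      (Set.indicator_nonneg (fun _ _ => zero_le_one) ω).trans (hζ ω)
  have hcoe : SL.E ξ = ((SL.E ξ).toReal : EReal) :=
    (EReal.coe_toReal (ne_top_of_le_ne_top (EReal.coe_ne_top c) hc)
      (ne_bot_of_le_ne_bot EReal.zero_ne_bot (hE_nonneg ξ hξ))).symm
  have hV : SL.V A ≤ (SL.E ξ).toReal := by
    refine csInf_le ⟨0, ?_⟩ ⟨ξ, hξ, hcoe⟩
    rintro v ⟨ζ, hζ, hv⟩
    exact EReal.coe_nonneg.mp (hv ▸ hE_nonneg ζ hζ)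
  exact hV.trans (EReal.coe_le_coe_iff.mp (hcoe ▸ hc))

theorem V_le_V_add_of_one_le_on_diff {A C : Set Ω} {η : Ω → ℝ} {c : ℝ} (hη : ∀ ω, 0 ≤ η ω)
    (hAC : ∀ ω ∈ A \ C, 1 ≤ η ω) (hc : SL.E η ≤ c) : SL.V A ≤ SL.V C + c := by
  rw [← sub_le_iff_le_add]
  refine le_csInf ⟨1, fun _ => 1, Set.indicator_le_self' fun _ _ => zero_le_one,
    SL.const_eq 1⟩ ?_
  rintro v ⟨ξ, hξ, hv⟩
  rw [sub_le_iff_le_add]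
  refine SL.V_le_of_E_le (ξ := fun ω => ξ ω + η ω) (Set.indicator_le' ?_ ?_) ?_
  · intro ω hA
    by_cases hC : ω ∈ C
    · have hξ₁ : 1 ≤ ξ ω := Set.indicator_of_mem hC (fun _ => (1 : ℝ)) ▸ hξ ω
      linarith [hη ω]
    · have hξ₀ : 0 ≤ ξ ω := Set.indicator_of_notMem hC (fun _ => (1 : ℝ)) ▸ hξ ω
      linarith [hAC ω ⟨hA, hC⟩]
  · exact fun ω _ => add_nonneg
      ((Set.indicator_nonneg (fun _ _ => zero_le_one) ω).trans (hξ ω)) (hη ω)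
  · calc SL.E (fun ω => ξ ω + η ω) ≤ SL.E ξ + SL.E η := SL.subadd ξ η
      _ ≤ (v : EReal) + (c : EReal) := add_le_add hv.le hc
      _ = ((v + c : ℝ) : EReal) := (EReal.coe_add v c).symm

theorem E_exp_mul_min_le {Y : Ω → ℝ} {b t y : ℝ} (hmean : SL.E Y ≤ 0)
    (hb : SL.E (fun ω => Y ω ^ 2) ≤ b) (ht : 0 ≤ t) (hy : 0 < y) :
    SL.E (fun ω => Real.exp (t * min (Y ω) y)) ≤ (Real.exp (bennettCumulant t y * b) : ℝ) := by
  set c := bennettCumulant t y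
  have hlin : SL.E (fun ω => t * Y ω) ≤ 0 := by
    rw [SL.pos_homog t ht]
    exact mul_nonpos_of_nonneg_of_nonpos (EReal.coe_nonneg.mpr ht) hmean
  have hquad : SL.E (fun ω => c * Y ω ^ 2) ≤ ((c * b : ℝ) : EReal) := by
    rw [SL.pos_homog c (bennettCumulant_nonneg t y), EReal.coe_mul]
    exact mul_le_mul_of_nonneg_left hb (EReal.coe_nonneg.mpr (bennettCumulant_nonneg t y))
  calc SL.E (fun ω => Real.exp (t * min (Y ω) y))
      ≤ SL.E (fun ω => 1 + (t * Y ω + c * Y ω ^ 2)) :=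
        SL.mono _ _ fun ω => exp_mul_min_le ht hy (Y ω)
    _ ≤ SL.E (fun _ => 1) + (SL.E (fun ω => t * Y ω) + SL.E (fun ω => c * Y ω ^ 2)) :=
        (SL.subadd _ _).trans (add_le_add le_rfl (SL.subadd _ _))
    _ ≤ ((1 : ℝ) : EReal) + (0 + ((c * b : ℝ) : EReal)) :=
        add_le_add (SL.const_eq 1).le (add_le_add hlin hquad)
    _ ≤ (Real.exp (c * b) : ℝ) := by
        rw [zero_add, ← EReal.coe_add, EReal.coe_le_coe_iff, add_comm]
        exact Real.add_one_le_exp _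

theorem isBLip_exp_comp {f : ℝ → ℝ} {L : ℝ≥0} {c : ℝ} (hf : LipschitzWith L f)
    (hfc : ∀ z, f z ≤ c) : IsBLip fun z => Real.exp (f z) := by
  refine ⟨⟨(Real.exp c).toNNReal * L, ?_⟩, Real.exp c, fun z => ?_⟩
  · exact lipschitzOnWith_univ.mp
      ((lipschitzOnWith_exp_Iic c).comp hf.lipschitzOnWith fun z _ => hfc z)
  · rw [Real.abs_exp]
    exact Real.exp_le_exp.mpr (hfc z)

theorem isBLip_exp_mul_min {t : ℝ} (ht : 0 ≤ t) (y : ℝ) :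
    IsBLip fun z => Real.exp (t * min z y) :=
  isBLip_exp_comp ((lipschitzWith_smul t).comp (LipschitzWith.id.min_const y))
    fun z => mul_le_mul_of_nonneg_left (min_le_right z y) ht

variable {SL} {n : ℕ} {X : Fin n → Ω → ℝ} {K : ℝ} {b : Fin n → ℝ} {t y : ℝ}

theorem UENDFin.E_prod_exp_mul_min_le (hX : SL.UENDFin K X) (hK : 0 ≤ K)
    (hmean : ∀ k, SL.E (X k) ≤ 0) (hb : ∀ k, SL.E (fun ω => X k ω ^ 2) ≤ b k)
    (ht : 0 ≤ t) (hy : 0 < y) :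
    SL.E (fun ω => ∏ k, Real.exp (t * min (X k ω) y)) ≤
      ((K * Real.exp (bennettCumulant t y * ∑ k, b k) : ℝ) : EReal) := by
  have hmono : Monotone fun z => Real.exp (t * min z y) := fun z w hzw => by
    dsimp only
    gcongr
  refine (hX _ (fun _ => isBLip_exp_mul_min ht y) (fun _ => hmono)
    fun _ _ => Real.exp_nonneg _).trans (EReal.coe_le_coe_iff.mpr ?_)
  rw [Finset.mul_sum, Real.exp_sum]
  have hE_nonneg : ∀ k, 0 ≤ SL.E (fun ω => Real.exp (t * min (X k ω) y)) :=
    fun k => SL.E_nonneg fun ω => Real.exp_nonneg _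
  gcongr with k
  · exact fun k _ => EReal.toReal_nonneg (hE_nonneg k)
  · exact EReal.toReal_le_toReal (SL.E_exp_mul_min_le (hmean k) (hb k) ht hy)
      (ne_bot_of_le_ne_bot EReal.zero_ne_bot (hE_nonneg k)) (EReal.coe_ne_top _)

theorem UENDFin.V_sum_ge_le_V_exists_ge_add_exp (hX : SL.UENDFin K X) (hK : 0 ≤ K)
    (hmean : ∀ k, SL.E (X k) ≤ 0) (hb : ∀ k, SL.E (fun ω => X k ω ^ 2) ≤ b k)
    (x : ℝ) (ht : 0 ≤ t) (hy : 0 < y) :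
    SL.V {ω | x ≤ ∑ k, X k ω} ≤ SL.V {ω | ∃ k, y ≤ X k ω} +
      K * Real.exp (-(t * x) + bennettCumulant t y * ∑ k, b k) := by
  refine SL.V_le_V_add_of_one_le_on_diff
    (η := fun ω => Real.exp (-(t * x)) * ∏ k, Real.exp (t * min (X k ω) y))
    (fun ω => by positivity) (fun ω hω => ?_) ?_
  · have hlt : ∀ k, X k ω < y := by simpa using hω.2
    exact one_le_exp_neg_mul_prod_exp_mul_min ht hω.1 fun k => (hlt k).le
  · rw [SL.pos_homog _ (Real.exp_nonneg _), Real.exp_add, mul_left_comm, EReal.coe_mul]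
    exact mul_le_mul_of_nonneg_left (hX.E_prod_exp_mul_min_le hK hmean hb ht hy)
      (EReal.coe_nonneg.mpr (Real.exp_nonneg _))

end SublinearExp

/-- Theorem 3.1(a): exponential inequality for upper extended negatively dependent
random variables. -/
theorem stmt0 {Ω : Type} (SL : SublinearExp Ω) (n : ℕ) (X : Fin n → Ω → ℝ)
    (K : ℝ) (hK : 1 ≤ K)
    (hUEND : SublinearExp.UENDFin SL K X)
    (hmean : ∀ k, SL.E (X k) ≤ 0)
    (B : ℝ) (hB : (B : EReal) = ∑ k, SL.E fun ω => (X k ω) ^ 2) :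
    ∀ x y : ℝ, 0 < x → 0 < y →
      SL.V {ω | x ≤ ∑ k, X k ω} ≤
        SL.V {ω | ∃ k, y ≤ X k ω} +
          K * Real.exp (-(x ^ 2 / (2 * (x * y + B))) *
            (1 + (2 / 3) * Real.log (1 + x * y / B))) := by
  intro x y hx hy
  have hsq_nonneg : ∀ k, 0 ≤ SL.E fun ω => X k ω ^ 2 := fun k =>
    SL.E_nonneg fun ω => sq_nonneg (X k ω)
  obtain ⟨b, hb, rfl⟩ := exists_coe_eq_of_sum_eq_coe (fun k _ => hsq_nonneg k) hB.symm
  have hb_nonneg : ∀ k, 0 ≤ b k := fun k =>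
    EReal.coe_nonneg.mp (hb k (Finset.mem_univ k) ▸ hsq_nonneg k)
  obtain ⟨t, ht, hexponent⟩ :=
    exists_neg_mul_add_bennettCumulant_mul_le (Finset.sum_nonneg fun k _ => hb_nonneg k) hx hy
  refine (hUEND.V_sum_ge_le_V_exists_ge_add_exp (zero_le_one.trans hK) hmean
    (fun k => (hb k (Finset.mem_univ k)).le) x ht hy).trans ?_
  gcongr
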